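/- Let (A, D) be an ultra-designated Cobounded-algebra with ⊥ ≠ ⊤. Then the map f_A : A → PS3 also preserves the negation: f_A(a*) = (f_A(a))* for every a ∈ A, where the negation on PS3 is given by 1* = 0, (½)* = ½, 0* = 1; moreover, for every a ∈ A, a ∈ D if and only if f_A(a) ∈ {½, 1}. -/

import Mathlib

open scoped Classical

/-- A Cobounded-algebra: a complete distributive lattice in which a supremum equals `⊤`
only if some member of the family equals `⊤`, and an infimum equals `⊥` only if some
member of the family equals `⊥`. -/
structure IsCobounded (α : Type u) [CompleteLattice α] : Prop where
  inf_sup_distrib : ∀ a b c : α, a ⊓ (b ⊔ c) = (a ⊓ b) ⊔ (a ⊓ c)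
  sup_inf_distrib : ∀ a b c : α, a ⊔ (b ⊓ c) = (a ⊔ b) ⊓ (a ⊔ c)
  iSup_eq_top : ∀ {ι : Type u} (f : ι → α), (⨆ i, f i) = ⊤ → ∃ j, f j = ⊤
  iInf_eq_bot : ∀ {ι : Type u} (f : ι → α), (⨅ i, f i) = ⊥ → ∃ j, f j = ⊥

/-- A designated set: a filter containing `⊤`, not containing `⊥`, upward closed and
closed under binary meets. -/
structure IsDesignated {α : Type u} [CompleteLattice α] (D : Set α) : Prop where
  top_mem : (⊤ : α) ∈ D
  bot_not_mem : (⊥ : α) ∉ D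
  mem_of_le : ∀ x ∈ D, ∀ y : α, x ≤ y → y ∈ D
  inf_mem : ∀ x ∈ D, ∀ y ∈ D, x ⊓ y ∈ D

/-- `D` is an ultrafilter: it is a designated set and every designated set containing
`D` equals `D`. -/
def IsUltraDesignated {α : Type u} [CompleteLattice α] (D : Set α) : Prop :=
  IsDesignated D ∧ ∀ E : Set α, IsDesignated E → D ⊆ E → E = D

/-- The negation `*` of a designated Cobounded-algebra `(A, D)`: `a* = ⊥` if `a = ⊤`,
`a* = a` if `a ∈ D` and `a ≠ ⊤`, and `a* = ⊤` if `a ∉ D`. -/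
noncomputable def dstar {α : Type u} [CompleteLattice α] (D : Set α) (a : α) : α :=
  if a = ⊤ then ⊥ else if a ∈ D then a else ⊤

/-- The algebra `PS3` is the three-element chain, realized as `Fin 3`
(`0` is `0`, `1` is `½`, `2` is `1`). -/
abbrev PS3 : Type := Fin 3

/-- Negation on `PS3`: `1* = 0`, `(½)* = ½`, `0* = 1`. -/
def PS3.neg (p : PS3) : PS3 := if p = 2 then 0 else if p = 1 then 1 else 2

/-- The map `f_A : A → PS3` sending `⊤` to `1` (i.e. `2 : Fin 3`), `⊥` to `0`
and everything else to `½` (i.e. `1 : Fin 3`). -/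
noncomputable def fA {α : Type u} [CompleteLattice α] (a : α) : PS3 :=
  if a = ⊤ then 2 else if a = ⊥ then 0 else 1

/-!
In a Cobounded-algebra, a binary meet is `⊥` only if one of its factors is. Hence the nonzero
elements form a filter, which contains every filter that omits `⊥`, so it is the only ultrafilter.
Both claims are then read off from `D = {⊥}ᶜ`.
-/

section

variable {α : Type*} [CompleteLattice α]

theorem IsCobounded.bot_ne_top (hA : IsCobounded α) : (⊥ : α) ≠ ⊤ := fun h ↦
  let ⟨j, _⟩ := hA.iInf_eq_bot PEmpty.elim ((iInf_of_empty _).trans h.symm)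
  j.elim

theorem IsCobounded.infIrred_bot (hA : IsCobounded α) : InfIrred (⊥ : α) := by
  refine ⟨fun h ↦ hA.bot_ne_top h.eq_top, fun x y hxy ↦ ?_⟩
  have hInf : ⨅ i : ULift Bool, cond i.down x y = ⊥ := by
    rw [iInf_ulift, ← inf_eq_iInf, hxy]
  obtain ⟨⟨_ | _⟩, hj⟩ := hA.iInf_eq_bot _ hInf
  · exact Or.inr hj
  · exact Or.inl hj

theorem IsDesignated.subset_compl_singleton_bot {D : Set α} (hD : IsDesignated D) : D ⊆ {⊥}ᶜ :=
  Set.subset_compl_singleton_iff.mpr hD.bot_not_mem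

theorem isDesignated_compl_singleton_bot (h : InfIrred (⊥ : α)) :
    IsDesignated ({⊥}ᶜ : Set α) where
  top_mem := h.ne_top.symm
  bot_not_mem := Set.notMem_compl_iff.mpr rfl
  mem_of_le _ hx _ hxy := ne_bot_of_le_ne_bot hx hxy
  inf_mem _ hx _ hy hxy := (h.2 hxy).elim hx hy

theorem IsUltraDesignated.eq_compl_singleton_bot {D : Set α} (hD : IsUltraDesignated D)
    (h : InfIrred (⊥ : α)) : D = {⊥}ᶜ :=
  (hD.2 _ (isDesignated_compl_singleton_bot h) hD.1.subset_compl_singleton_bot).symm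

theorem fA_top : fA (⊤ : α) = 2 := if_pos rfl

theorem fA_bot [Nontrivial α] : fA (⊥ : α) = 0 := by
  rw [fA, if_neg bot_ne_top, if_pos rfl]

theorem fA_of_ne_bot_of_ne_top {a : α} (hbot : a ≠ ⊥) (htop : a ≠ ⊤) : fA a = 1 := by
  rw [fA, if_neg htop, if_neg hbot]

theorem dstar_top (D : Set α) : dstar D ⊤ = ⊥ := if_pos rfl

theorem dstar_of_mem {D : Set α} {a : α} (ha : a ∈ D) (htop : a ≠ ⊤) : dstar D a = a := by
  rw [dstar, if_neg htop, if_pos ha]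

theorem dstar_of_notMem {D : Set α} {a : α} (ha : a ∉ D) (htop : a ≠ ⊤) : dstar D a = ⊤ := by
  rw [dstar, if_neg htop, if_neg ha]

theorem fA_mem_pair_iff_ne_bot [Nontrivial α] (a : α) : fA a ∈ ({1, 2} : Set PS3) ↔ a ≠ ⊥ := by
  by_cases hbot : a = ⊥
  · simp [hbot, fA_bot]
  by_cases htop : a = ⊤
  · simp [htop, fA_top]
  · simp [hbot, fA_of_ne_bot_of_ne_top hbot htop]

theorem fA_dstar_compl_singleton_bot [Nontrivial α] (a : α) :
    fA (dstar {⊥}ᶜ a) = PS3.neg (fA a) := by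
  by_cases htop : a = ⊤
  · rw [htop, dstar_top, fA_bot, fA_top]
    rfl
  by_cases hbot : a = ⊥
  · have hmem : a ∉ ({⊥}ᶜ : Set α) := Set.notMem_compl_iff.mpr hbot
    rw [dstar_of_notMem hmem htop, fA_top, hbot, fA_bot]
    rfl
  · rw [dstar_of_mem hbot htop, fA_of_ne_bot_of_ne_top hbot htop]
    rfl

theorem fA_preserves_star_general (h : InfIrred (⊥ : α)) {D : Set α} (hD : IsUltraDesignated D) :
    (∀ a : α, fA (dstar D a) = PS3.neg (fA a)) ∧
    (∀ a : α, a ∈ D ↔ fA a ∈ ({1, 2} : Set PS3)) := by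
  have : Nontrivial α := nontrivial_of_ne _ _ h.ne_top
  obtain rfl := hD.eq_compl_singleton_bot h
  exact ⟨fA_dstar_compl_singleton_bot, fun a ↦ (fA_mem_pair_iff_ne_bot a).symm⟩

end

/-- For an ultra-designated Cobounded-algebra `(A, D)`, the map `f_A` also preserves
negation, and `a ∈ D` iff `f_A a ∈ {½, 1}`. -/
theorem fA_preserves_star {α : Type u} [CompleteLattice α] (hA : IsCobounded α)
    (hbt : (⊥ : α) ≠ ⊤) {D : Set α} (hD : IsUltraDesignated D) :
    (∀ a : α, fA (dstar D a) = PS3.neg (fA a)) ∧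
    (∀ a : α, a ∈ D ↔ fA a ∈ ({1, 2} : Set PS3)) :=
  fA_preserves_star_general hA.infIrred_bot hD
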